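/- For every finite graph G and every positive integer k, there exists a rooted compact tree decomposition (T,β) of G such that every adhesion of (T,β) has at most k vertices and every bag β(t) is (k,k)-edge-unbreakable in G. -/

import Mathlib

/-- An edge cut of a graph: a pair of disjoint vertex sets covering `V(G)`. -/
def IsEdgeCut {V : Type} (A B : Set V) : Prop :=
  Disjoint A B ∧ A ∪ B = Set.univ

/-- The order of an edge cut `(A,B)`: the number of edges of `G` with one endpoint
in `A` and the other in `B`. -/
noncomputable def edgeCutOrder {V : Type} (G : SimpleGraph V) (A B : Set V) : ℕ :=
  {e : Sym2 V | ∃ u v : V, e = s(u, v) ∧ G.Adj u v ∧ u ∈ A ∧ v ∈ B}.ncard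

/-- `S` is `(q,k)`-edge-unbreakable in `G`: every edge cut of order at most `k`
has at most `q` vertices of `S` on one of its sides. -/
def IsEdgeUnbreakable {V : Type} (G : SimpleGraph V) (S : Set V) (q k : ℕ) : Prop :=
  ∀ A B : Set V, IsEdgeCut A B → edgeCutOrder G A B ≤ k →
    (A ∩ S).ncard ≤ q ∨ (B ∩ S).ncard ≤ q

/-- `s` is an ancestor of `t` (possibly `s = t`) with respect to the parent map. -/
def IsAncestor {ι : Type} (parent : ι → ι) (s t : ι) : Prop :=
  ∃ n : ℕ, parent^[n] t = s

/-- `s` lies on the (unique) path between `t₁` and `t₂` in the rooted tree given by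
`parent`. -/
def OnTreePath {ι : Type} (parent : ι → ι) (s t₁ t₂ : ι) : Prop :=
  (IsAncestor parent s t₁ ∨ IsAncestor parent s t₂) ∧
    ∀ u : ι, IsAncestor parent u t₁ → IsAncestor parent u t₂ → IsAncestor parent u s

/-- A rooted tree decomposition of `G`. -/
structure IsRootedTreeDecomp {V ι : Type} (G : SimpleGraph V) (root : ι)
    (parent : ι → ι) (β : ι → Set V) : Prop where
  parent_root : parent root = root
  reaches_root : ∀ t : ι, ∃ n : ℕ, parent^[n] t = root
  exists_bag : ∀ v : V, ∃ t : ι, v ∈ β t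
  adj_bag : ∀ u v : V, G.Adj u v → ∃ t : ι, u ∈ β t ∧ v ∈ β t
  bag_connected : ∀ (v : V) (t₁ t₂ s : ι), v ∈ β t₁ → v ∈ β t₂ →
    OnTreePath parent s t₁ t₂ → v ∈ β s

/-- The (open) neighborhood of a vertex set `X` in `G`. -/
def nbhd {V : Type} (G : SimpleGraph V) (X : Set V) : Set V :=
  {v | v ∉ X ∧ ∃ u ∈ X, G.Adj u v}

/-- `γ(t)`: union of the bags of `t` and all its descendants. -/
def gammaSet {V ι : Type} (parent : ι → ι) (β : ι → Set V) (t : ι) : Set V :=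
  {v | ∃ s : ι, IsAncestor parent t s ∧ v ∈ β s}

/-- `α(t) = γ(t) \ σ(t)`. -/
def alphaSet {V ι : Type} (parent : ι → ι) (β : ι → Set V) (t : ι) : Set V :=
  gammaSet parent β t \ (β t ∩ β (parent t))

/-- Compactness of a rooted tree decomposition: for every non-root node `t`,
`G[α(t)]` is connected and `N_G(α(t)) = σ(t)`. -/
def IsCompactRTD {V ι : Type} (G : SimpleGraph V) (root : ι) (parent : ι → ι)
    (β : ι → Set V) : Prop :=
  ∀ t : ι, t ≠ root → (G.induce (alphaSet parent β t)).Connected ∧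
    nbhd G (alphaSet parent β t) = β t ∩ β (parent t)

/-- far apart -/
def FarSets {V : Type} (G : SimpleGraph V) (X Y : Set V) : Prop :=
  ∀ x ∈ X, ∀ y ∈ Y, x ≠ y ∧ ¬ G.Adj x y

/-- bag of a member of a laminar family -/
def famBag {V : Type} (G : SimpleGraph V) (L : Finset (Set V)) (X : Set V) : Set V :=
  {v | (v ∈ X ∨ v ∈ nbhd G X) ∧ ∀ Y ∈ L, Y ⊂ X → v ∉ Y}

/-- laminar family -/
structure LamFam {V : Type} (G : SimpleGraph V) (k : ℕ) (L : Finset (Set V)) : Prop where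
  univ_mem : Set.univ ∈ L
  nested : ∀ X ∈ L, ∀ Y ∈ L, X ⊆ Y ∨ Y ⊆ X ∨ FarSets G X Y
  card : ∀ X ∈ L, (nbhd G X).ncard ≤ k

lemma far_symm {V : Type} {G : SimpleGraph V} {X Y : Set V} (h : FarSets G X Y) :
    FarSets G Y X := fun x hx y hy => ⟨(h y hy x hx).1.symm, fun e => (h y hy x hx).2 e.symm⟩

lemma cl_mono {V : Type} {G : SimpleGraph V} {X Y : Set V} (h : X ⊆ Y) {v : V}
    (hv : v ∈ X ∨ v ∈ nbhd G X) : v ∈ Y ∨ v ∈ nbhd G Y := by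
  by_cases hY : v ∈ Y
  · exact Or.inl hY
  · rcases hv with hv | ⟨_, u, hu, ha⟩
    · exact Or.inl (h hv)
    · exact Or.inr ⟨hY, u, h hu, ha⟩

lemma cl_not_far {V : Type} {G : SimpleGraph V} {X Y : Set V} {v : V}
    (hv : v ∈ X ∨ v ∈ nbhd G X) (hY : v ∈ Y) (h : FarSets G X Y) : False := by
  rcases hv with hv | ⟨_, u, hu, ha⟩
  · exact (h v hv v hY).1 rfl
  · exact (h u hu v hY).2 ha

lemma exists_least {V : Type} [Fintype V] {G : SimpleGraph V} {k : ℕ} {M : Finset (Set V)}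
    (hM : LamFam G k M) (v : V) : ∃ X ∈ M, v ∈ X ∧ ∀ Y ∈ M, v ∈ Y → X ⊆ Y := by
  classical
  obtain ⟨X, hX, hmin⟩ := (M.filter (fun X => v ∈ X)).exists_min_image (fun X => X.ncard)
    ⟨Set.univ, by simp [hM.univ_mem]⟩
  simp only [Finset.mem_filter] at hX hmin
  refine ⟨X, hX.1, hX.2, fun Y hY hv => ?_⟩
  rcases hM.nested X hX.1 Y hY with h | h | h
  · exact h
  · exact (Set.eq_of_subset_of_ncard_le h (hmin Y ⟨hY, hv⟩) (Set.toFinite _)).ge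
  · exact absurd rfl (h v hX.2 v hv).1

lemma exists_parent {V : Type} [Fintype V] {G : SimpleGraph V} {k : ℕ} {M : Finset (Set V)}
    (hM : LamFam G k M) (X : Set V) (hX : X.Nonempty) (hne : X ≠ Set.univ) :
    ∃ P ∈ M, X ⊂ P ∧ ∀ Y ∈ M, X ⊂ Y → P ⊆ Y := by
  classical
  obtain ⟨P, hP, hmin⟩ := (M.filter (fun P => X ⊂ P)).exists_min_image (fun X => X.ncard)
    ⟨Set.univ, by simp [hM.univ_mem, Set.ssubset_univ_iff, hne]⟩
  simp only [Finset.mem_filter] at hP hmin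
  refine ⟨P, hP.1, hP.2, fun Y hY hv => ?_⟩
  rcases hM.nested P hP.1 Y hY with h | h | h
  · exact h
  · exact (Set.eq_of_subset_of_ncard_le h (hmin Y ⟨hY, hv⟩) (Set.toFinite _)).ge
  · obtain ⟨x, hx⟩ := hX
    exact absurd rfl (h x (hP.2.1 hx) x (hv.1 hx)).1

lemma mem_bag_iff {V : Type} {G : SimpleGraph V} {k : ℕ} {M : Finset (Set V)}
    (hM : LamFam G k M) {v : V} {X t : Set V} (hX : X ∈ M) (hv : v ∈ X)
    (hmin : ∀ Y ∈ M, v ∈ Y → X ⊆ Y) (ht : t ∈ M) :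
    v ∈ famBag G M t ↔ t ⊆ X ∧ (v ∈ t ∨ v ∈ nbhd G t) := by
  constructor
  · rintro ⟨h1, h2⟩
    refine ⟨?_, h1⟩
    rcases hM.nested t ht X hX with h | h | h
    · exact h
    · by_contra hc
      exact h2 X hX ⟨h, hc⟩ hv
    · exact (cl_not_far h1 hv h).elim
  · rintro ⟨h1, h2⟩
    exact ⟨h2, fun Y hY hs hvY => hs.2 (h1.trans (hmin Y hY hvY))⟩

lemma final_tree {V : Type} [Fintype V] (G : SimpleGraph V) (k : ℕ) (M : Finset (Set V))
    (hM : LamFam G k M) (hc : ∀ X ∈ M, X ≠ Set.univ → (G.induce X).Connected)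
    (hu : ∀ X ∈ M, IsEdgeUnbreakable G (famBag G M X) k k) :
    ∃ (ι : Type) (_ : Fintype ι) (root : ι) (parent : ι → ι) (β : ι → Set V),
      IsRootedTreeDecomp G root parent β ∧
      IsCompactRTD G root parent β ∧
      (∀ t : ι, t ≠ root → (β t ∩ β (parent t)).ncard ≤ k) ∧
      (∀ t : ι, IsEdgeUnbreakable G (β t) k k) := by
  classical
  have hne : ∀ X ∈ M, X ≠ Set.univ → X.Nonempty := fun X hX h => by
    have := (hc X hX h).nonempty
    exact Set.nonempty_coe_sort.1 this
  have hpar : ∀ X : {X // X ∈ M}, ∃ P : {X // X ∈ M}, (X.1 = Set.univ → P = X) ∧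
      (X.1 ≠ Set.univ → X.1 ⊂ P.1 ∧ ∀ Y ∈ M, X.1 ⊂ Y → P.1 ⊆ Y) := by
    rintro ⟨X, hX⟩
    by_cases h : X = Set.univ
    · exact ⟨⟨X, hX⟩, fun _ => rfl, fun h' => absurd h h'⟩
    · obtain ⟨P, hP, h1, h2⟩ := exists_parent hM X (hne X hX h) h
      exact ⟨⟨P, hP⟩, fun h' => absurd h' h, fun _ => ⟨h1, h2⟩⟩
  choose par hp1 hp2 using hpar
  have hsub : ∀ X, X.1 ⊆ (par X).1 := fun X => by
    by_cases h : X.1 = Set.univ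
    · rw [hp1 X h]
    · exact (hp2 X h).1.1
  have hanc : ∀ s t : {X // X ∈ M}, IsAncestor par s t ↔ t.1 ⊆ s.1 := by
    intro s t
    constructor
    · rintro ⟨n, rfl⟩
      induction n with
      | zero => exact subset_rfl
      | succ n ih =>
        rw [Function.iterate_succ_apply']
        exact ih.trans (hsub _)
    · intro h
      obtain ⟨m, hm⟩ : ∃ m, m = s.1.ncard - t.1.ncard := ⟨_, rfl⟩
      induction m using Nat.strong_induction_on generalizing t with
      | _ m ih =>
        by_cases he : t = s
        · exact ⟨0, he⟩
        · have hss : t.1 ⊂ s.1 := h.ssubset_of_ne (fun h => he (Subtype.ext h))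
          have htu : t.1 ≠ Set.univ := fun h => hss.2 (h ▸ Set.subset_univ _)
          have h1 := (hp2 t htu).2 s.1 s.2 hss
          have c1 := Set.ncard_lt_ncard (hp2 t htu).1
          have c2 := Set.ncard_le_ncard h1
          obtain ⟨n, hn⟩ := ih (s.1.ncard - (par t).1.ncard) (by omega) (par t) h1 rfl
          exact ⟨n + 1, by rw [Function.iterate_succ_apply]; exact hn⟩
  have hsig : ∀ t : {X // X ∈ M}, t ≠ ⟨Set.univ, hM.univ_mem⟩ →
      famBag G M t.1 ∩ famBag G M (par t).1 = nbhd G t.1 := by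
    intro t ht
    have htu : t.1 ≠ Set.univ := fun h => ht (Subtype.ext h)
    ext v
    constructor
    · rintro ⟨h1, h2⟩
      rcases h1.1 with h | h
      · exact absurd h (h2.2 t.1 t.2 (hp2 t htu).1)
      · exact h
    · intro hv
      obtain ⟨X, hX, hvX, hmin⟩ := exists_least hM v
      have b1 : v ∈ famBag G M t.1 := ⟨Or.inr hv, fun Y _ hs hvY => hv.1 (hs.1 hvY)⟩
      refine ⟨b1, ?_⟩
      have := (mem_bag_iff hM hX hvX hmin t.2).1 b1
      refine (mem_bag_iff hM hX hvX hmin (par t).2).2 ⟨?_, cl_mono (hsub t) this.2⟩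
      exact (hp2 t htu).2 X hX ⟨this.1, fun h => hv.1 (h hvX)⟩
  have halpha : ∀ t : {X // X ∈ M}, t ≠ ⟨Set.univ, hM.univ_mem⟩ →
      alphaSet par (fun t => famBag G M t.1) t = t.1 := by
    intro t ht
    unfold alphaSet
    rw [show (fun t : {X // X ∈ M} => famBag G M t.1) t ∩
      (fun t : {X // X ∈ M} => famBag G M t.1) (par t) = nbhd G t.1 from hsig t ht]
    ext v
    constructor
    · rintro ⟨⟨s, hs, hv⟩, h2⟩
      rw [hanc] at hs
      rcases cl_mono hs hv.1 with h | h
      · exact h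
      · exact absurd h h2
    · intro hv
      obtain ⟨X, hX, hvX, hmin⟩ := exists_least hM v
      refine ⟨⟨⟨X, hX⟩, (hanc _ _).2 (hmin _ t.2 hv), ?_⟩, fun h => h.1 hv⟩
      exact (mem_bag_iff hM hX hvX hmin hX).2 ⟨subset_rfl, Or.inl hvX⟩
  refine ⟨{X // X ∈ M}, inferInstance, ⟨Set.univ, hM.univ_mem⟩, par,
    fun t => famBag G M t.1, ?_, ?_, ?_, fun t => hu t.1 t.2⟩
  · refine ⟨hp1 _ rfl, fun t => (hanc _ t).2 (Set.subset_univ _), ?_, ?_, ?_⟩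
    · intro v
      obtain ⟨X, hX, hvX, hmin⟩ := exists_least hM v
      exact ⟨⟨X, hX⟩, (mem_bag_iff hM hX hvX hmin hX).2 ⟨subset_rfl, Or.inl hvX⟩⟩
    · intro u v ha
      obtain ⟨X, hX, hvX, hmin⟩ := exists_least hM v
      obtain ⟨Y, hY, huY, hmin'⟩ := exists_least hM u
      have c1 := (mem_bag_iff hM hX hvX hmin hX).2 ⟨subset_rfl, Or.inl hvX⟩
      have c2 := (mem_bag_iff hM hY huY hmin' hY).2 ⟨subset_rfl, Or.inl huY⟩
      rcases hM.nested X hX Y hY with h | h | h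
      · refine ⟨⟨X, hX⟩, (mem_bag_iff hM hY huY hmin' hX).2 ⟨h, ?_⟩, c1⟩
        by_cases hh : u ∈ X
        · exact Or.inl hh
        · exact Or.inr ⟨hh, v, hvX, ha.symm⟩
      · refine ⟨⟨Y, hY⟩, c2, (mem_bag_iff hM hX hvX hmin hY).2 ⟨h, ?_⟩⟩
        by_cases hh : v ∈ Y
        · exact Or.inl hh
        · exact Or.inr ⟨hh, u, huY, ha⟩
      · exact absurd ha.symm (h v hvX u huY).2
    · intro v t1 t2 s h1 h2 ⟨h3, h4⟩
      obtain ⟨X, hX, hvX, hmin⟩ := exists_least hM v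
      have e1 := (mem_bag_iff hM hX hvX hmin t1.2).1 h1
      have e2 := (mem_bag_iff hM hX hvX hmin t2.2).1 h2
      refine (mem_bag_iff hM hX hvX hmin s.2).2 ⟨?_, ?_⟩
      · exact (hanc ⟨X, hX⟩ s).1 (h4 ⟨X, hX⟩ ((hanc _ _).2 e1.1) ((hanc _ _).2 e2.1))
      · rcases h3 with h | h
        · exact cl_mono ((hanc _ _).1 h) e1.2
        · exact cl_mono ((hanc _ _).1 h) e2.2
  · intro t ht
    rw [halpha t ht]
    exact ⟨hc t.1 t.2 (fun h => ht (Subtype.ext h)), (hsig t ht).symm⟩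
  · intro t ht
    show (famBag G M t.1 ∩ famBag G M (par t).1).ncard ≤ k
    rw [hsig t ht]
    exact hM.card _ t.2

/-- connected component of an induced subgraph -/
def IsCompOf {V : Type} (G : SimpleGraph V) (D K : Set V) : Prop :=
  K ⊆ D ∧ (G.induce K).Connected ∧ ∀ v ∈ nbhd G K, v ∉ D

lemma conn_sub {V : Type} {G : SimpleGraph V} {K' K : Set V} (hc : (G.induce K').Connected)
    {v : V} (hv : v ∈ K') (hvK : v ∈ K) (h : ∀ u ∈ nbhd G K, u ∉ K') : K' ⊆ K := by
  intro w hw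
  obtain ⟨p⟩ := hc.preconnected ⟨v, hv⟩ ⟨w, hw⟩
  have key : ∀ (a b : K') (p : (G.induce K').Walk a b), a.1 ∈ K → b.1 ∈ K := by
    intro a b p
    induction p with
    | nil => exact id
    | @cons a c b hadj p ih =>
      intro ha
      apply ih
      by_contra hcK
      exact h c.1 ⟨hcK, a.1, ha, hadj⟩ c.2
  exact key _ _ p hvK

lemma exists_comp {V : Type} [Fintype V] (G : SimpleGraph V) {D : Set V} {v : V} (hv : v ∈ D) :
    ∃ K, IsCompOf G D K ∧ v ∈ K := by
  classical
  obtain ⟨K, hK, hmax⟩ := (Finset.univ.filter (fun K : Set V => K ⊆ D ∧ v ∈ K ∧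
    (G.induce K).Connected)).exists_max_image (fun X => X.ncard) ⟨{v}, by
      simp only [Finset.mem_filter, Finset.mem_univ, true_and]
      refine ⟨by simpa using hv, rfl, ?_⟩
      have : Nonempty ({v} : Set V) := ⟨⟨v, rfl⟩⟩
      refine ⟨fun a b => ?_⟩
      rw [Subsingleton.elim a b]⟩
  simp only [Finset.mem_filter, Finset.mem_univ, true_and] at hK hmax
  refine ⟨K, ⟨hK.1, hK.2.2, ?_⟩, hK.2.1⟩
  rintro u ⟨huK, w, hw, ha⟩ huD
  have h1 : (G.induce (K ∪ {w, u})).Connected :=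
    SimpleGraph.induce_union_connected hK.2.2.preconnected
      (SimpleGraph.induce_pair_connected_of_adj ha).preconnected ⟨w, hw, by simp⟩
  have h2 := hmax (K ∪ {w, u}) ⟨by
    intro x hx
    rcases hx with hx | rfl | rfl
    · exact hK.1 hx
    · exact hK.1 hw
    · exact huD, Or.inl hK.2.1, h1⟩
  have h3 : K ⊂ K ∪ {w, u} := ⟨Set.subset_union_left, fun h => huK (h (by simp))⟩
  have := Set.ncard_lt_ncard h3
  omega

lemma compactify {V : Type} [Fintype V] (G : SimpleGraph V) (k : ℕ) (L : Finset (Set V))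
    (hL : LamFam G k L) : ∃ M : Finset (Set V), LamFam G k M ∧
      (∀ X ∈ M, X ≠ Set.univ → (G.induce X).Connected) ∧
      ∀ X ∈ M, ∃ D ∈ L, famBag G M X ⊆ famBag G L D := by
  classical
  refine ⟨insert Set.univ (Finset.univ.filter (fun K => ∃ D ∈ L, IsCompOf G D K)), ?_, ?_, ?_⟩
  · have hnb : ∀ D K, IsCompOf G D K → nbhd G K ⊆ nbhd G D := by
      intro D K h v hv
      refine ⟨h.2.2 v hv, ?_⟩
      obtain ⟨_, u, hu, ha⟩ := hv
      exact ⟨u, h.1 hu, ha⟩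
    have key : ∀ D K D' K', D ⊆ D' → IsCompOf G D K → IsCompOf G D' K' →
        K ⊆ K' ∨ FarSets G K K' := by
      intro D K D' K' hD h h'
      by_cases hm : ∃ v, v ∈ K ∧ v ∈ K'
      · obtain ⟨v, h1, h2⟩ := hm
        exact Or.inl (conn_sub h.2.1 h1 h2 (fun u hu huK => h'.2.2 u hu (hD (h.1 huK))))
      · refine Or.inr fun x hx y hy => ⟨fun e => hm ⟨x, hx, e ▸ hy⟩, fun ha => ?_⟩
        exact h'.2.2 x ⟨fun hx' => hm ⟨x, hx, hx'⟩, y, hy, ha.symm⟩ (hD (h.1 hx))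
    refine ⟨by simp, ?_, ?_⟩
    · intro X hX Y hY
      simp only [Finset.mem_insert, Finset.mem_filter, Finset.mem_univ, true_and] at hX hY
      rcases hX with rfl | ⟨D, hD, hX⟩
      · exact Or.inr (Or.inl (Set.subset_univ _))
      rcases hY with rfl | ⟨D', hD', hY⟩
      · exact Or.inl (Set.subset_univ _)
      rcases hL.nested D hD D' hD' with h | h | h
      · rcases key _ _ _ _ h hX hY with h | h <;> simp [h]
      · rcases key _ _ _ _ h hY hX with h | h
        · simp [h]
        · exact Or.inr (Or.inr (far_symm h))
      · exact Or.inr (Or.inr fun x hx y hy => h x (hX.1 hx) y (hY.1 hy))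
    · intro X hX
      simp only [Finset.mem_insert, Finset.mem_filter, Finset.mem_univ, true_and] at hX
      rcases hX with rfl | ⟨D, hD, hX⟩
      · exact hL.card _ hL.univ_mem
      · exact (Set.ncard_le_ncard (hnb _ _ hX)).trans (hL.card D hD)
  · intro X hX hne
    simp only [Finset.mem_insert, Finset.mem_filter, Finset.mem_univ, true_and] at hX
    rcases hX with rfl | ⟨D, hD, hX⟩
    · exact absurd rfl hne
    · exact hX.2.1
  · intro X hX
    simp only [Finset.mem_insert, Finset.mem_filter, Finset.mem_univ, true_and] at hX
    by_cases hu : X = Set.univ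
    · subst hu
      refine ⟨Set.univ, hL.univ_mem, ?_⟩
      rintro v ⟨h1, h2⟩
      refine ⟨h1, fun Y hY hs hv => ?_⟩
      obtain ⟨K, hK, hvK⟩ := exists_comp G hv
      refine h2 K ?_ (hK.1.trans_ssubset hs) hvK
      simp only [Finset.mem_insert, Finset.mem_filter, Finset.mem_univ, true_and]
      exact Or.inr ⟨Y, hY, hK⟩
    · have hX' := hX.resolve_left hu
      obtain ⟨D, hD, hmin⟩ := (L.filter (fun D => IsCompOf G D X)).exists_min_image
        (fun X => X.ncard) (by
          obtain ⟨D, h1, h2⟩ := hX'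
          exact ⟨D, by simp [h1, h2]⟩)
      simp only [Finset.mem_filter] at hD hmin
      refine ⟨D, hD.1, ?_⟩
      rintro v ⟨h1, h2⟩
      rcases h1 with h1 | h1
      · refine ⟨Or.inl (hD.2.1 h1), fun Y hY hs hv => ?_⟩
        obtain ⟨K, hK, hvK⟩ := exists_comp G hv
        have hKX : K ⊆ X := conn_sub hK.2.1 hvK h1
          (fun u hu huK => hD.2.2.2 u hu (hs.1 (hK.1 huK)))
        rcases hKX.eq_or_ssubset with rfl | hss
        · have := hmin Y ⟨hY, hK⟩
          have := Set.ncard_lt_ncard hs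
          omega
        · refine h2 K ?_ hss hvK
          simp only [Finset.mem_insert, Finset.mem_filter, Finset.mem_univ, true_and]
          exact Or.inr ⟨Y, hY, hK⟩
      · have hvD := hD.2.2.2 v h1
        obtain ⟨_, u, hu, ha⟩ := h1
        exact ⟨Or.inr ⟨hvD, u, hD.2.1 hu, ha⟩, fun Y _ hs hv => hvD (hs.1 hv)⟩

/-- weight function -/
def wt (k n : ℕ) : ℕ := if n ≤ k then 0 else 3 ^ n

/-- potential -/
noncomputable def pot {V : Type} (G : SimpleGraph V) (k : ℕ) (L : Finset (Set V)) : ℕ :=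
  ∑ X ∈ L, wt k (famBag G L X).ncard

lemma wt_mono {k a b : ℕ} (h : a ≤ b) : wt k a ≤ wt k b := by
  unfold wt
  split_ifs
  · exact le_rfl
  · exact Nat.zero_le _
  · omega
  · exact Nat.pow_le_pow_right (by norm_num) h

lemma wt_split {k a b n : ℕ} (ha : a < n) (hb : b < n) (hn : k < n) :
    wt k a + wt k b < wt k n := by
  obtain ⟨m, rfl⟩ : ∃ m, n = m + 1 := ⟨n - 1, by omega⟩
  have h1 : wt k a ≤ 3 ^ m := by
    unfold wt
    split_ifs
    · exact Nat.zero_le _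
    · exact Nat.pow_le_pow_right (by norm_num) (by omega)
  have h2 : wt k b ≤ 3 ^ m := by
    unfold wt
    split_ifs
    · exact Nat.zero_le _
    · exact Nat.pow_le_pow_right (by norm_num) (by omega)
  have h3 : wt k (m+1) = 3 * 3 ^ m := by
    unfold wt
    rw [if_neg (by omega), pow_succ]
    ring
  have : 0 < 3 ^ m := by positivity
  omega

lemma wt_zero {k n : ℕ} (h : n ≤ k) : wt k n = 0 := if_pos h

lemma wt_split' {k a b n : ℕ} (ha : a ≤ n) (hb : b ≤ n) (h1 : a = n → b ≤ k)
    (h2 : b = n → a ≤ k) : wt k a + wt k b ≤ wt k n := by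
  by_cases hn : n ≤ k
  · rw [wt_zero (ha.trans hn), wt_zero (hb.trans hn)]
    omega
  · by_cases e1 : a = n
    · rw [wt_zero (h1 e1), e1]
      omega
    · by_cases e2 : b = n
      · rw [wt_zero (h2 e2), e2]
        omega
      · exact (wt_split (by omega) (by omega) (by omega)).le

lemma sum_inj_le {α β : Type} (L' : Finset α) (L : Finset β) (F' : α → ℕ) (F : β → ℕ)
    (g : α → β) (hg : ∀ x ∈ L', g x ∈ L) (hinj : Set.InjOn g L')
    (h : ∀ x ∈ L', F' x ≤ F (g x)) : ∑ x ∈ L', F' x ≤ ∑ y ∈ L, F y := by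
  classical
  calc ∑ x ∈ L', F' x ≤ ∑ x ∈ L', F (g x) := Finset.sum_le_sum h
    _ = ∑ y ∈ L'.image g, F y := (Finset.sum_image hinj).symm
    _ ≤ ∑ y ∈ L, F y := Finset.sum_le_sum_of_subset (by
        intro y hy
        obtain ⟨x, hx, rfl⟩ := Finset.mem_image.1 hy
        exact hg x hx)

/-- `(P,Q)` breaks `W` -/
def Breaks {V : Type} (G : SimpleGraph V) (k : ℕ) (W P Q : Set V) : Prop :=
  FarSets G P Q ∧ ((P ∪ Q)ᶜ).ncard ≤ k ∧ k < (W \ Q).ncard ∧ k < (W \ P).ncard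

lemma edge_of_breaks {V : Type} [Fintype V] (G : SimpleGraph V) (k : ℕ) (W : Set V)
    (h : ∀ P Q, ¬ Breaks G k W P Q) : IsEdgeUnbreakable G W k k := by
  classical
  intro A B hAB ho
  by_contra hc
  push Not at hc
  have hdis : ∀ x, x ∈ A → x ∈ B → False := fun x h1 h2 => Set.disjoint_left.1 hAB.1 h1 h2
  have hcov : ∀ x, x ∈ A ∨ x ∈ B := fun x => by
    have : x ∈ A ∪ B := hAB.2 ▸ Set.mem_univ x
    exact this
  set S : Set V := {a | a ∈ A ∧ ∃ b ∈ B, G.Adj a b} with hS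
  refine h (A \ S) B ⟨?_, ?_, ?_, ?_⟩
  · intro x hx y hy
    exact ⟨fun e => hdis x hx.1 (e ▸ hy), fun ha => hx.2 ⟨hx.1, y, hy, ha⟩⟩
  · have e : (A \ S ∪ B)ᶜ ⊆ S := by
      intro x hx
      by_contra hxS
      rcases hcov x with h | h
      · exact hx (Or.inl ⟨h, hxS⟩)
      · exact hx (Or.inr h)
    refine (Set.ncard_le_ncard e).trans (le_trans ?_ ho)
    have : ∀ a : V, ∃ b : V, a ∈ S → b ∈ B ∧ G.Adj a b := by
      intro a
      by_cases ha : a ∈ S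
      · obtain ⟨_, b, hb⟩ := ha
        exact ⟨b, fun _ => hb⟩
      · exact ⟨a, fun h => absurd h ha⟩
    choose nb hnb using this
    refine Set.ncard_le_ncard_of_injOn (fun a => s(a, nb a)) ?_ ?_ (Set.toFinite _)
    · intro a ha
      exact ⟨a, nb a, rfl, (hnb a ha).2, ha.1, (hnb a ha).1⟩
    · intro a ha a' ha' he
      rcases Sym2.eq_iff.1 he with h | h
      · exact h.1
      · exact (hdis a ha.1 (h.1 ▸ (hnb a' ha').1)).elim
  · refine hc.1.trans_le (Set.ncard_le_ncard ?_)
    exact fun x hx => ⟨hx.2, fun hB => hdis x hx.1 hB⟩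
  · refine hc.2.trans_le (Set.ncard_le_ncard ?_)
    exact fun x hx => ⟨hx.2, fun hA => hdis x hA.1 hx.1⟩

/-- complement of the closed neighborhood -/
def coSet {V : Type} (G : SimpleGraph V) (D : Set V) : Set V := {v | v ∉ D ∧ v ∉ nbhd G D}

lemma coSet_anti {V : Type} {G : SimpleGraph V} {D D' : Set V} (h : D ⊆ D') :
    coSet G D' ⊆ coSet G D := by
  intro v hv
  have : ¬ (v ∈ D ∨ v ∈ nbhd G D) := fun hc => by
    rcases cl_mono h hc with h | h
    · exact hv.1 h
    · exact hv.2 h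
  exact ⟨fun h => this (Or.inl h), fun h => this (Or.inr h)⟩

lemma nbhd_coSet {V : Type} {G : SimpleGraph V} {D : Set V} :
    nbhd G (coSet G D) ⊆ nbhd G D := by
  rintro v ⟨h1, u, hu, ha⟩
  by_contra hv
  have hvD : v ∈ D := by
    by_contra hvD
    exact h1 ⟨hvD, hv⟩
  exact hu.2 ⟨hu.1, v, hvD, ha.symm⟩

lemma far_coSet {V : Type} {G : SimpleGraph V} {D D' : Set V} (h : D ⊆ D') :
    FarSets G D (coSet G D') := by
  intro x hx y hy
  exact ⟨fun e => hy.1 (e ▸ h hx), fun ha => hy.2 ⟨hy.1, x, h hx, ha⟩⟩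

lemma sub_coSet {V : Type} {G : SimpleGraph V} {D D' : Set V} (h : FarSets G D D') :
    D ⊆ coSet G D' := by
  intro x hx
  refine ⟨fun h' => (h x hx x h').1 rfl, ?_⟩
  rintro ⟨_, u, hu, ha⟩
  exact (h x hx u hu).2 ha.symm

lemma reroot {V : Type} [Fintype V] (G : SimpleGraph V) (k : ℕ) (L : Finset (Set V))
    (hL : LamFam G k L) (C : Set V) (hC : C ∈ L) (hCne : C.Nonempty) (hCu : C ≠ Set.univ) :
    ∃ L' : Finset (Set V), LamFam G k L' ∧ pot G k L' ≤ pot G k L ∧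
      famBag G L' Set.univ = famBag G L C := by
  classical
  have hchain : ∀ D ∈ L, ∀ D' ∈ L, C ⊆ D → C ⊆ D' → D ⊆ D' ∨ D' ⊆ D := by
    intro D hD D' hD' h h'
    rcases hL.nested D hD D' hD' with h1 | h1 | h1
    · exact Or.inl h1
    · exact Or.inr h1
    · obtain ⟨x, hx⟩ := hCne
      exact absurd rfl (h1 x (h hx) x (h' hx)).1
  obtain ⟨L', hL'⟩ : ∃ L' : Finset (Set V), ∀ X, X ∈ L' ↔ X = Set.univ ∨ (X ∈ L ∧ ¬ C ⊆ X) ∨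
      ∃ D ∈ L, C ⊆ D ∧ D ≠ Set.univ ∧ X = coSet G D :=
    ⟨Finset.univ.filter (fun X => X = Set.univ ∨ (X ∈ L ∧ ¬ C ⊆ X) ∨
      ∃ D ∈ L, C ⊆ D ∧ D ≠ Set.univ ∧ X = coSet G D), by simp⟩
  have hco_ne : ∀ D, C ⊆ D → coSet G D ≠ Set.univ := by
    intro D hD he
    obtain ⟨x, hx⟩ := hCne
    have : x ∈ coSet G D := he ▸ Set.mem_univ x
    exact this.1 (hD hx)
  have key1 : ∀ D ∈ L, ¬ C ⊆ D → ∀ D' ∈ L, C ⊆ D' →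
      D ⊆ coSet G D' ∨ FarSets G D (coSet G D') := by
    intro D hD hn D' hD' hc
    rcases hL.nested D hD D' hD' with h | h | h
    · exact Or.inr (far_coSet h)
    · exact absurd (hc.trans h) hn
    · exact Or.inl (sub_coSet h)
  have hbag : famBag G L' Set.univ = famBag G L C := by
    ext v
    constructor
    · rintro ⟨_, h2⟩
      have h3 := h2 (coSet G C) ((hL' _).2 (Or.inr (Or.inr ⟨C, hC, subset_rfl, hCu, rfl⟩)))
        (Set.ssubset_univ_iff.2 (hco_ne C subset_rfl))
      refine ⟨?_, fun Y hY hs hv => ?_⟩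
      · by_contra hc
        push Not at hc
        exact h3 hc
      · refine h2 Y ((hL' _).2 (Or.inr (Or.inl ⟨hY, hs.2⟩))) (Set.ssubset_univ_iff.2 ?_) hv
        rintro rfl
        exact hs.2 (Set.subset_univ _)
    · rintro ⟨h1, h2⟩
      refine ⟨Or.inl (Set.mem_univ v), fun Y hY hs hv => ?_⟩
      rcases (hL' Y).1 hY with rfl | ⟨hY, hn⟩ | ⟨D, hD, hc, hu, rfl⟩
      · exact hs.2 subset_rfl
      · rcases hL.nested Y hY C hC with h | h | h
        · exact h2 Y hY ⟨h, hn⟩ hv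
        · exact hn h
        · exact cl_not_far h1 hv (far_symm h)
      · rcases cl_mono hc h1 with h | h
        · exact hv.1 h
        · exact hv.2 h
  refine ⟨L', ⟨(hL' _).2 (Or.inl rfl), ?_, ?_⟩, ?_, hbag⟩
  · intro X hX Y hY
    rcases (hL' X).1 hX with rfl | ⟨hX, hn⟩ | ⟨D, hD, hc, hu, rfl⟩
    · exact Or.inr (Or.inl (Set.subset_univ _))
    · rcases (hL' Y).1 hY with rfl | ⟨hY, hn'⟩ | ⟨D', hD', hc', hu', rfl⟩
      · exact Or.inl (Set.subset_univ _)
      · exact hL.nested X hX Y hY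
      · rcases key1 X hX hn D' hD' hc' with h | h <;> simp [h]
    · rcases (hL' Y).1 hY with rfl | ⟨hY, hn'⟩ | ⟨D', hD', hc', hu', rfl⟩
      · exact Or.inl (Set.subset_univ _)
      · rcases key1 Y hY hn' D hD hc with h | h
        · simp [h]
        · exact Or.inr (Or.inr (far_symm h))
      · rcases hchain D hD D' hD' hc hc' with h | h
        · exact Or.inr (Or.inl (coSet_anti h))
        · exact Or.inl (coSet_anti h)
  · intro X hX
    rcases (hL' X).1 hX with rfl | ⟨hX, hn⟩ | ⟨D, hD, hc, hu, rfl⟩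
    · exact hL.card _ hL.univ_mem
    · exact hL.card _ hX
    · exact (Set.ncard_le_ncard nbhd_coSet).trans (hL.card D hD)
  · have hg : ∀ X : Set V, ∃ Y : Set V, X ∈ L' → Y ∈ L ∧ famBag G L' X ⊆ famBag G L Y ∧
        ((X = Set.univ ∧ Y = C) ∨ (Y = X ∧ ¬ C ⊆ X) ∨
          (∃ D ∈ L, C ⊆ D ∧ D ⊂ Y ∧ (∀ F ∈ L, D ⊂ F → Y ⊆ F) ∧ X = coSet G D)) := by
      intro X
      by_cases hX : X ∈ L'
      swap
      · exact ⟨X, fun h => absurd h hX⟩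
      by_cases hu : X = Set.univ
      · exact ⟨C, fun _ => ⟨hC, by rw [hu, hbag], Or.inl ⟨hu, rfl⟩⟩⟩
      by_cases h1 : X ∈ L ∧ ¬ C ⊆ X
      · refine ⟨X, fun _ => ⟨h1.1, ?_, Or.inr (Or.inl ⟨rfl, h1.2⟩)⟩⟩
        rintro v ⟨h2, h3⟩
        exact ⟨h2, fun Y hY hs => h3 Y
          ((hL' _).2 (Or.inr (Or.inl ⟨hY, fun h => h1.2 (h.trans hs.1)⟩))) hs⟩
      · have h2 := ((hL' X).1 hX |>.resolve_left hu).resolve_left h1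
        obtain ⟨D, hD, hmax⟩ := (L.filter (fun D => C ⊆ D ∧ D ≠ Set.univ ∧
          X = coSet G D)).exists_max_image (fun X => X.ncard) (by
            obtain ⟨D, h2⟩ := h2
            exact ⟨D, by simpa using h2⟩)
        simp only [Finset.mem_filter] at hD hmax
        obtain ⟨hD, hCD, hDu, hXD⟩ := hD
        obtain ⟨P, hP, hDP, hPmin⟩ := exists_parent hL D (hCne.mono hCD) hDu
        refine ⟨P, fun _ => ⟨hP, ?_, Or.inr (Or.inr ⟨D, hD, hCD, hDP, hPmin, hXD⟩)⟩⟩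
        rintro v ⟨h3, h4⟩
        have hvD : v ∉ D := by
          rw [hXD] at h3
          rcases h3 with h3 | h3
          · exact h3.1
          · exact (nbhd_coSet h3).1
        refine ⟨?_, fun F hF hs hv => ?_⟩
        · by_cases hPu : P = Set.univ
          · exact Or.inl (hPu ▸ Set.mem_univ v)
          · by_contra hc
            push Not at hc
            refine h4 (coSet G P) ((hL' _).2 (Or.inr (Or.inr
              ⟨P, hP, hCD.trans hDP.1, hPu, rfl⟩))) ?_ hc
            refine (hXD ▸ coSet_anti hDP.1 : coSet G P ⊆ X).ssubset_of_ne fun he => ?_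
            have := hmax P ⟨hP, hCD.trans hDP.1, hPu, he.symm⟩
            have := Set.ncard_lt_ncard hDP
            omega
        · by_cases hCF : C ⊆ F
          · rcases hchain F hF D hD hCF hCD with h | h
            · exact hvD (h hv)
            · by_cases he : F ⊆ D
              · exact hvD (he hv)
              · exact hs.2 (hPmin F hF ⟨h, he⟩)
          · rcases hL.nested F hF D hD with h | h | h
            · exact hvD (h hv)
            · exact hCF (hCD.trans h)
            · have hFX : F ⊆ X := hXD ▸ sub_coSet h
              refine h4 F ((hL' _).2 (Or.inr (Or.inl ⟨hF, hCF⟩))) (hFX.ssubset_of_ne ?_) hv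
              rintro rfl
              exact h1 ⟨hF, hCF⟩
    choose g hg using hg
    refine sum_inj_le L' L _ _ g (fun X hX => (hg X hX).1) ?_
      (fun X hX => wt_mono (Set.ncard_le_ncard (hg X hX).2.1))
    intro X hX X' hX' he
    rcases (hg X hX).2.2 with ⟨a1, a2⟩ | ⟨a1, a2⟩ | ⟨D, d1, d2, d3, d4, d5⟩ <;>
    rcases (hg X' hX').2.2 with ⟨b1, b2⟩ | ⟨b1, b2⟩ | ⟨D', e1, e2, e3, e4, e5⟩
    · rw [a1, b1]
    · exact absurd (by rw [← b1, ← he, a2]) b2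
    · rw [← he, a2] at e3
      exact absurd e2 e3.2
    · exact absurd (by rw [← a1, he, b2]) a2
    · rw [← a1, ← b1, he]
    · exact absurd (by rw [← a1, he]; exact e2.trans e3.1) a2
    · rw [he, b2] at d3
      exact absurd d2 d3.2
    · exact absurd (by rw [← b1, ← he]; exact d2.trans d3.1) b2
    · have hDD : D = D' := by
        rw [← he] at e3 e4
        rcases hchain D d1 D' e1 d2 e2 with h | h
        · by_contra hne
          exact e3.2 (d4 D' e1 (h.ssubset_of_ne hne))
        · by_contra hne
          exact d3.2 (e4 D d1 (h.ssubset_of_ne (Ne.symm hne)))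
      rw [d5, e5, hDD]

lemma breaks_symm {V : Type} {G : SimpleGraph V} {k : ℕ} {W P Q : Set V}
    (h : Breaks G k W P Q) : Breaks G k W Q P :=
  ⟨far_symm h.1, by rw [Set.union_comm]; exact h.2.1, h.2.2.2, h.2.2.1⟩

lemma corner {V : Type} [Fintype V] {G : SimpleGraph V} {k : ℕ} {L : Finset (Set V)}
    {P Q : Set V} (hb : Breaks G k (famBag G L Set.univ) P Q)
    (hmin : ∀ P' Q', Breaks G k (famBag G L Set.univ) P' Q' →
      ((P ∪ Q)ᶜ).ncard ≤ ((P' ∪ Q')ᶜ).ncard)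
    {D : Set V} (hD : D ∈ L) (hDu : D ≠ Set.univ) :
    ((P ∪ Q)ᶜ ∩ D).ncard ≤ (nbhd G D ∩ Q).ncard := by
  classical
  set S := (P ∪ Q)ᶜ with hS
  have hWD : ∀ v ∈ famBag G L Set.univ, v ∉ D := fun v hv =>
    hv.2 D hD (Set.ssubset_univ_iff.2 hDu)
  have hsub : (P ∪ D ∪ (Q \ (D ∪ nbhd G D)))ᶜ ⊆ (S \ D) ∪ (nbhd G D ∩ Q) := by
    intro v hv
    simp only [Set.mem_compl_iff, Set.mem_union, Set.mem_diff, not_or, not_and, hS,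
      Set.mem_inter_iff] at hv ⊢
    tauto
  have hcard := (Set.ncard_le_ncard hsub).trans (Set.ncard_union_le _ _)
  have hSD := Set.ncard_inter_add_ncard_diff_eq_ncard S D
  by_contra hc
  push Not at hc
  have hlt : ((P ∪ D ∪ (Q \ (D ∪ nbhd G D)))ᶜ).ncard < S.ncard := by omega
  have := hmin (P ∪ D) (Q \ (D ∪ nbhd G D)) ⟨?_, ?_, ?_, ?_⟩
  · omega
  · rintro x (hx | hx) y ⟨hy, hy'⟩
    · exact hb.1 x hx y hy
    · exact ⟨fun e => hy' (Or.inl (e ▸ hx)),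
        fun ha => hy' (Or.inr ⟨fun h => hy' (Or.inl h), x, hx, ha⟩)⟩
  · exact hlt.le.trans hb.2.1
  · exact hb.2.2.1.trans_le (Set.ncard_le_ncard fun v hv => ⟨hv.1, fun h => hv.2 h.1⟩)
  · refine hb.2.2.2.trans_le (Set.ncard_le_ncard fun v hv => ⟨hv.1, ?_⟩)
    rintro (h | h)
    · exact hv.2 h
    · exact hWD v hv.1 h

lemma nbhd_inter_sub {V : Type} {G : SimpleGraph V} {P Q : Set V} (hf : FarSets G P Q)
    (D : Set V) : nbhd G (D ∩ P) ⊆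
      (nbhd G D ∩ P) ∪ (nbhd G D ∩ (P ∪ Q)ᶜ) ∪ ((P ∪ Q)ᶜ ∩ D) := by
  rintro v ⟨h1, u, hu, ha⟩
  have hQ : v ∉ Q := fun h => (hf u hu.2 v h).2 ha
  have hn : v ∉ D → v ∈ nbhd G D := fun h => ⟨h, u, hu.1, ha⟩
  simp only [Set.mem_compl_iff, Set.mem_union, Set.mem_inter_iff, not_or] at h1 ⊢
  tauto

lemma three_card {V : Type} [Fintype V] {P Q : Set V} (hd : Disjoint P Q) (X : Set V) :
    X.ncard = (X ∩ P).ncard + (X ∩ Q).ncard + (X ∩ (P ∪ Q)ᶜ).ncard := by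
  have h1 := Set.ncard_inter_add_ncard_diff_eq_ncard X (P ∪ Q)
  have h2 : (X ∩ (P ∪ Q)).ncard = (X ∩ P).ncard + (X ∩ Q).ncard := by
    rw [Set.inter_union_distrib_left]
    exact Set.ncard_union_eq (hd.mono Set.inter_subset_right Set.inter_subset_right)
  rw [Set.diff_eq] at h1
  omega

lemma half_sum {V : Type} [Fintype V] [DecidableEq (Set V)] {G : SimpleGraph V} {k : ℕ}
    {L L' : Finset (Set V)} {P Q : Set V} (hf : FarSets G P Q)
    (hsub : ∀ D ∈ L, D ∩ P ∈ L') :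
    ∑ X ∈ L.image (fun D => D ∩ P), wt k (famBag G L' X).ncard ≤
    ∑ D ∈ L, wt k ((famBag G L D ∩ P).ncard + (nbhd G D ∩ (P ∪ Q)ᶜ).ncard +
      ((P ∪ Q)ᶜ ∩ D).ncard) := by
  classical
  have hg : ∀ X : Set V, ∃ D : Set V, X ∈ L.image (fun D => D ∩ P) → D ∈ L ∧ D ∩ P = X ∧
      ∀ F ∈ L, F ∩ P = X → D.ncard ≤ F.ncard := by
    intro X
    by_cases hX : X ∈ L.image (fun D => D ∩ P)
    swap
    · exact ⟨X, fun h => absurd h hX⟩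
    obtain ⟨D, hD, hmin⟩ := (L.filter (fun D => D ∩ P = X)).exists_min_image
        (fun X => X.ncard) (by
          obtain ⟨D, h1, h2⟩ := Finset.mem_image.1 hX
          exact ⟨D, by simp [h1, h2]⟩)
    simp only [Finset.mem_filter] at hD hmin
    exact ⟨D, fun _ => ⟨hD.1, hD.2, fun F h1 h2 => hmin F ⟨h1, h2⟩⟩⟩
  choose g hg using hg
  refine sum_inj_le _ L _ _ g (fun X hX => (hg X hX).1) ?_ ?_
  · intro X hX X' hX' he
    rw [← (hg X hX).2.1, ← (hg X' hX').2.1, he]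
  · intro X hX
    obtain ⟨hD, hDX, hmin⟩ := hg X hX
    generalize g X = D at *
    apply wt_mono
    have : famBag G L' X ⊆ (famBag G L D ∩ P) ∪ (nbhd G D ∩ (P ∪ Q)ᶜ) ∪ ((P ∪ Q)ᶜ ∩ D) := by
      rintro v ⟨h1, h2⟩
      rcases h1 with h1 | h1
      · have h1' : v ∈ D ∩ P := hDX ▸ h1
        refine Or.inl (Or.inl ⟨⟨Or.inl h1'.1, fun Y hY hs hv => ?_⟩, h1'.2⟩)
        have hYX : Y ∩ P ⊆ X := hDX ▸ Set.inter_subset_inter_left _ hs.1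
        refine h2 (Y ∩ P) (hsub Y hY) (hYX.ssubset_of_ne fun he => ?_) ⟨hv, h1'.2⟩
        have := hmin Y hY he
        have := Set.ncard_lt_ncard hs
        omega
      · rw [← hDX] at h1
        rcases nbhd_inter_sub hf D h1 with (h | h) | h
        · exact Or.inl (Or.inl ⟨⟨Or.inr h.1, fun Y _ hs hv => h.1.1 (hs.1 hv)⟩, h.2⟩)
        · exact Or.inl (Or.inr h)
        · exact Or.inr h
    refine (Set.ncard_le_ncard this).trans ((Set.ncard_union_le _ _).trans ?_)
    exact Nat.add_le_add_right (Set.ncard_union_le _ _) _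

lemma split_root {V : Type} [Fintype V] (G : SimpleGraph V) (k : ℕ) (L : Finset (Set V))
    (hL : LamFam G k L) (P Q : Set V) (hb : Breaks G k (famBag G L Set.univ) P Q)
    (hmin : ∀ P' Q', Breaks G k (famBag G L Set.univ) P' Q' →
      ((P ∪ Q)ᶜ).ncard ≤ ((P' ∪ Q')ᶜ).ncard) :
    ∃ L' : Finset (Set V), LamFam G k L' ∧ pot G k L' < pot G k L := by
  classical
  have hdis : Disjoint P Q := Set.disjoint_left.2 fun x h1 h2 => (hb.1 x h1 x h2).1 rfl
  have hbs := breaks_symm hb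
  have hcQ : ∀ D ∈ L, D ≠ Set.univ → ((P ∪ Q)ᶜ ∩ D).ncard ≤ (nbhd G D ∩ Q).ncard :=
    fun D hD hu => corner hb hmin hD hu
  have hcP : ∀ D ∈ L, D ≠ Set.univ → ((P ∪ Q)ᶜ ∩ D).ncard ≤ (nbhd G D ∩ P).ncard := by
    intro D hD hu
    have := corner hbs (by rw [Set.union_comm Q P]; exact hmin) hD hu
    rwa [Set.union_comm Q P] at this
  have hnu : nbhd G (Set.univ : Set V) = ∅ := by
    ext v
    simp [nbhd]
  set W := famBag G L Set.univ with hW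
  have hWP := Set.ncard_inter_add_ncard_diff_eq_ncard W P
  have hWQ := Set.ncard_inter_add_ncard_diff_eq_ncard W Q
  have hW3 := three_card hdis W
  have hWS : (W ∩ (P ∪ Q)ᶜ).ncard ≤ ((P ∪ Q)ᶜ).ncard := Set.ncard_le_ncard Set.inter_subset_right
  obtain ⟨_, hb2, hb3, hb4⟩ := hb
  have hPne : P.Nonempty := by
    by_contra hc
    rw [Set.not_nonempty_iff_eq_empty] at hc
    have : (W ∩ P).ncard = 0 := by simp [hc]
    omega
  have hQne : Q.Nonempty := by
    by_contra hc
    rw [Set.not_nonempty_iff_eq_empty] at hc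
    have : (W ∩ Q).ncard = 0 := by simp [hc]
    omega
  have hPu : P ≠ Set.univ := by
    rintro rfl
    obtain ⟨x, hx⟩ := hQne
    exact Set.disjoint_left.1 hdis (Set.mem_univ x) hx
  have hQu : Q ≠ Set.univ := by
    rintro rfl
    obtain ⟨x, hx⟩ := hPne
    exact Set.disjoint_left.1 hdis hx (Set.mem_univ x)
  set L' : Finset (Set V) := {Set.univ} ∪ (L.image (fun D => D ∩ P) ∪ L.image (fun D => D ∩ Q))
    with hL'
  have mem : ∀ X, X ∈ L' ↔ X = Set.univ ∨ (∃ D ∈ L, D ∩ P = X) ∨ (∃ D ∈ L, D ∩ Q = X) := by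
    intro X
    simp [hL']
  have hfar : FarSets G P Q := hbs.1 |> far_symm
  have same : ∀ R : Set V, ∀ D ∈ L, ∀ D' ∈ L, D ∩ R ⊆ D' ∩ R ∨ D' ∩ R ⊆ D ∩ R ∨
      FarSets G (D ∩ R) (D' ∩ R) := by
    intro R D hD D' hD'
    rcases hL.nested D hD D' hD' with h | h | h
    · exact Or.inl (Set.inter_subset_inter_left _ h)
    · exact Or.inr (Or.inl (Set.inter_subset_inter_left _ h))
    · exact Or.inr (Or.inr fun x hx y hy => h x hx.1 y hy.1)
  have diff : ∀ D D' : Set V, FarSets G (D ∩ P) (D' ∩ Q) :=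
    fun D D' x hx y hy => hfar x hx.2 y hy.2
  refine ⟨L', ⟨?_, ?_, ?_⟩, ?_⟩
  · simp [mem]
  · intro X hX Y hY
    rcases (mem X).1 hX with rfl | ⟨D, hD, rfl⟩ | ⟨D, hD, rfl⟩
    · exact Or.inr (Or.inl (Set.subset_univ _))
    · rcases (mem Y).1 hY with rfl | ⟨D', hD', rfl⟩ | ⟨D', hD', rfl⟩
      · exact Or.inl (Set.subset_univ _)
      · exact same P D hD D' hD'
      · exact Or.inr (Or.inr (diff _ _))
    · rcases (mem Y).1 hY with rfl | ⟨D', hD', rfl⟩ | ⟨D', hD', rfl⟩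
      · exact Or.inl (Set.subset_univ _)
      · exact Or.inr (Or.inr (far_symm (diff _ _)))
      · exact same Q D hD D' hD'
  · intro X hX
    rcases (mem X).1 hX with rfl | ⟨D, hD, rfl⟩ | ⟨D, hD, rfl⟩
    · exact hL.card _ hL.univ_mem
    · have h1 := Set.ncard_le_ncard (nbhd_inter_sub hfar D)
      have h2 := Set.ncard_union_le ((nbhd G D ∩ P) ∪ (nbhd G D ∩ (P ∪ Q)ᶜ)) ((P ∪ Q)ᶜ ∩ D)
      have h3 := Set.ncard_union_le (nbhd G D ∩ P) (nbhd G D ∩ (P ∪ Q)ᶜ)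
      have h4 := three_card hdis (nbhd G D)
      have h5 := hL.card D hD
      by_cases hu : D = Set.univ
      · subst hu
        simp only [hnu, Set.empty_inter, Set.ncard_empty, Set.inter_univ] at *
        omega
      · have := hcQ D hD hu
        omega
    · have h1 := Set.ncard_le_ncard (nbhd_inter_sub hbs.1 D)
      rw [Set.union_comm Q P] at h1
      have h2 := Set.ncard_union_le ((nbhd G D ∩ Q) ∪ (nbhd G D ∩ (P ∪ Q)ᶜ)) ((P ∪ Q)ᶜ ∩ D)
      have h3 := Set.ncard_union_le (nbhd G D ∩ Q) (nbhd G D ∩ (P ∪ Q)ᶜ)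
      have h4 := three_card hdis (nbhd G D)
      have h5 := hL.card D hD
      by_cases hu : D = Set.univ
      · subst hu
        simp only [hnu, Set.empty_inter, Set.ncard_empty, Set.inter_univ] at *
        omega
      · have := hcP D hD hu
        omega
  · have hsP := half_sum (k := k) (L := L) (L' := L') hfar
      (fun D hD => (mem _).2 (Or.inr (Or.inl ⟨D, hD, rfl⟩)))
    have hsQ := half_sum (k := k) (L := L) (L' := L') hbs.1
      (fun D hD => (mem _).2 (Or.inr (Or.inr ⟨D, hD, rfl⟩)))
    rw [Set.union_comm Q P] at hsQ
    have hroot : wt k (famBag G L' Set.univ).ncard = 0 := by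
      apply wt_zero
      refine (Set.ncard_le_ncard ?_).trans hb2
      rintro v ⟨_, h2⟩ (hv | hv)
      · exact h2 P ((mem _).2 (Or.inr (Or.inl ⟨_, hL.univ_mem, by simp⟩)))
          (Set.ssubset_univ_iff.2 hPu) hv
      · exact h2 Q ((mem _).2 (Or.inr (Or.inr ⟨_, hL.univ_mem, by simp⟩)))
          (Set.ssubset_univ_iff.2 hQu) hv
    have hun : ∀ (s t : Finset (Set V)) (F : Set V → ℕ),
        ∑ x ∈ s ∪ t, F x ≤ ∑ x ∈ s, F x + ∑ x ∈ t, F x := by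
      intro s t F
      rw [← Finset.sum_union_inter]
      exact Nat.le_add_right _ _
    have t1 : pot G k L' ≤ _ := hun {Set.univ}
      (L.image (fun D => D ∩ P) ∪ L.image (fun D => D ∩ Q))
      (fun X => wt k (famBag G L' X).ncard)
    have t2 := hun (L.image (fun D => D ∩ P)) (L.image (fun D => D ∩ Q))
      (fun X => wt k (famBag G L' X).ncard)
    rw [Finset.sum_singleton, hroot] at t1
    have t3 : ∑ D ∈ L, wt k ((famBag G L D ∩ P).ncard + (nbhd G D ∩ (P ∪ Q)ᶜ).ncard +
      ((P ∪ Q)ᶜ ∩ D).ncard) + ∑ D ∈ L, wt k ((famBag G L D ∩ Q).ncard +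
      (nbhd G D ∩ (P ∪ Q)ᶜ).ncard + ((P ∪ Q)ᶜ ∩ D).ncard) < pot G k L := by
      rw [← Finset.sum_add_distrib]
      have hstrict : wt k ((famBag G L Set.univ ∩ P).ncard +
          (nbhd G Set.univ ∩ (P ∪ Q)ᶜ).ncard + ((P ∪ Q)ᶜ ∩ Set.univ).ncard) +
          wt k ((famBag G L Set.univ ∩ Q).ncard +
          (nbhd G Set.univ ∩ (P ∪ Q)ᶜ).ncard + ((P ∪ Q)ᶜ ∩ Set.univ).ncard) <
          wt k (famBag G L Set.univ).ncard := by
        rw [hnu, Set.empty_inter, Set.ncard_empty, Set.inter_univ, ← hW]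
        apply wt_split <;> omega
      refine Finset.sum_lt_sum (fun D hD => ?_) ⟨Set.univ, hL.univ_mem, hstrict⟩
      by_cases hu : D = Set.univ
      · subst hu
        exact hstrict.le
      · have e1 := hcP D hD hu
        have e2 := hcQ D hD hu
        have e3 := three_card hdis (nbhd G D)
        have e4 := three_card hdis (famBag G L D)
        have e5 := hL.card D hD
        have hnb : nbhd G D ⊆ famBag G L D := fun v hv =>
          ⟨Or.inr hv, fun Y _ hs h => hv.1 (hs.1 h)⟩
        have e6 := Set.ncard_le_ncard (Set.inter_subset_inter_left P hnb)
        have e7 := Set.ncard_le_ncard (Set.inter_subset_inter_left Q hnb)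
        have e8 := Set.ncard_le_ncard (Set.inter_subset_inter_left (P ∪ Q)ᶜ hnb)
        apply wt_split' <;> omega
    omega

lemma exists_good_family {V : Type} [Fintype V] (G : SimpleGraph V) (k : ℕ) :
    ∃ L : Finset (Set V), LamFam G k L ∧
      ∀ X ∈ L, ∀ P Q, ¬ Breaks G k (famBag G L X) P Q := by
  classical
  have h0 : LamFam G k {Set.univ} := by
    refine ⟨by simp, ?_, ?_⟩
    · intro X hX Y hY
      simp only [Finset.mem_singleton] at hX hY
      subst hX hY
      exact Or.inl subset_rfl
    · intro X hX
      simp only [Finset.mem_singleton] at hX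
      subst hX
      have : nbhd G (Set.univ : Set V) = ∅ := by
        ext v
        simp [nbhd]
      simp [this]
  obtain ⟨L, hL, hmin⟩ := (Finset.univ.filter (fun L => LamFam G k L)).exists_min_image
    (pot G k) ⟨{Set.univ}, by simp [h0]⟩
  simp only [Finset.mem_filter, Finset.mem_univ, true_and] at hL hmin
  have root : ∀ L, LamFam G k L → (∀ L', LamFam G k L' → pot G k L ≤ pot G k L') →
      ∀ P Q, ¬ Breaks G k (famBag G L Set.univ) P Q := by
    intro L hL hmin P Q hb
    obtain ⟨⟨P', Q'⟩, h1, h2⟩ := (Finset.univ.filter (fun p : Set V × Set V =>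
      Breaks G k (famBag G L Set.univ) p.1 p.2)).exists_min_image
      (fun p => ((p.1 ∪ p.2)ᶜ).ncard) ⟨(P, Q), by simp [hb]⟩
    simp only [Finset.mem_filter, Finset.mem_univ, true_and] at h1 h2
    obtain ⟨L', hL', hlt⟩ := split_root G k L hL P' Q' h1 (fun P'' Q'' h => h2 (P'', Q'') h)
    have := hmin L' hL'
    omega
  refine ⟨L, hL, fun X hX P Q hb => ?_⟩
  by_cases hu : X = Set.univ
  · subst hu
    exact root L hL hmin P Q hb
  · by_cases hne : X.Nonempty
    · obtain ⟨L', hL', hle, he⟩ := reroot G k L hL X hX hne hu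
      exact root L' hL' (fun L'' h => hle.trans (hmin L'' h)) P Q (he ▸ hb)
    · rw [Set.not_nonempty_iff_eq_empty] at hne
      subst hne
      have he : famBag G L ∅ = ∅ := by
        ext v
        simp [famBag, nbhd]
      have := hb.2.2.1
      simp [he] at this

lemma unbreakable_mono {V : Type} [Fintype V] {G : SimpleGraph V} {S T : Set V} {q k : ℕ}
    (h : S ⊆ T) (hT : IsEdgeUnbreakable G T q k) : IsEdgeUnbreakable G S q k := by
  intro A B h1 h2
  rcases hT A B h1 h2 with h3 | h3
  · exact Or.inl ((Set.ncard_le_ncard (Set.inter_subset_inter_right A h)).trans h3)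
  · exact Or.inr ((Set.ncard_le_ncard (Set.inter_subset_inter_right B h)).trans h3)

/-- every finite graph `G` and positive integer `k` admit a rooted
compact tree decomposition with all adhesions of size at most `k` whose every
bag is `(k,k)`-edge-unbreakable in `G`. -/
theorem exists_rooted_compact_edgeUnbreakable_decomposition
    (V : Type) [Fintype V] (G : SimpleGraph V) (k : ℕ) (hk : 0 < k) :
    ∃ (ι : Type) (_ : Fintype ι) (root : ι) (parent : ι → ι) (β : ι → Set V),
      IsRootedTreeDecomp G root parent β ∧
      IsCompactRTD G root parent β ∧
      (∀ t : ι, t ≠ root → (β t ∩ β (parent t)).ncard ≤ k) ∧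
      (∀ t : ι, IsEdgeUnbreakable G (β t) k k) := by
  obtain ⟨L, hL, hb⟩ := exists_good_family G k
  obtain ⟨M, hM, hc, hbag⟩ := compactify G k L hL
  refine final_tree G k M hM hc (fun X hX => ?_)
  obtain ⟨D, hD, hsub⟩ := hbag X hX
  exact unbreakable_mono hsub (edge_of_breaks G k _ (hb D hD))
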